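/- Let 0 < a ≤ 2 and let r ≥ 1 be an integer. For (r₁,r₂) ∈ {0,…,N−1}² with gcd(r₁,r₂,N) = 1, let S_N(r₁,r₂) := #{(x,y) ∈ ℤ² : |x| < √N/2, |y| < a√N/2, r₁x + r₂y ≡ 0 (mod N)}. Then lim_{N→∞} #{(r₁,r₂) : gcd(r₁,r₂,N) = 1 and S_N(r₁,r₂) = r} / #{(r₁,r₂) : gcd(r₁,r₂,N) = 1} = c_{2,r}(a), where c_{2,r}(a) = 0 if r is even, c_{2,1}(a) = 1 − 3a/π², and c_{2,2k+1}(a) = (3a/π²)·(1/k² − 1/(k+1)²) for every integer k ≥ 1. -/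

import Mathlib

open Filter

/-!
If `2XY ≤ N` and `gcd(r₁, r₂, N) = 1`, any two solutions of `r₁x + r₂y ≡ 0 (mod N)` in the rectangle
`|x| < X`, `|y| < Y` are parallel, because `N` divides their determinant, which is smaller than `N`.
They are therefore the multiples `jv` with `|j| ≤ m` of a single vector `v`, so their number is
`2m + 1`, and the rectangle shrunk by a factor `n` contains `2⌊m/n⌋` nonzero ones.

Since `∑ g, μ(g) ⌊m/(kg)⌋` is `1` if `k ≤ m` and `0` otherwise, the proportion of pairs `(r₁, r₂)`
with `m ≥ k` is half of `∑ g, μ(g) M(kg)`, where `M(n)` is the mean number of nonzero solutions in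
the rectangle shrunk by `n`. A nonzero vector `w` is a solution for a number of pairs that depends
only on `gcd(w)`, hence `M` can be evaluated by counting integer points in rectangles. With
`X = α√N` and `Y = β√N` this gives `M(n) → 4αβ/n²`, with an error term that is `O(τ(N)/√N)`, and the
uniform bound `M(n) = O(1/n²)`. By dominated convergence the proportion tends to
`(1/2) ∑ g, μ(g) 4αβ/(kg)² = 12αβ/(π²k²)`; differences in `k` give the theorem.
-/

section DivisorBound

open Finset

lemma exists_add_one_pow_le_mul_two_pow (k : ℕ) :
    ∃ A : ℕ, 1 ≤ A ∧ ∀ v : ℕ, (v + 1) ^ k ≤ A * 2 ^ v := by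
  obtain ⟨B, hB⟩ := (tendsto_pow_const_div_const_pow_of_one_lt k one_lt_two).bddAbove_range
  refine ⟨2 * ⌈B⌉₊ + 1, by lia, fun v => ?_⟩
  have hv : ((v + 1 : ℕ) : ℝ) ^ k ≤ ⌈B⌉₊ * 2 ^ (v + 1) :=
    (div_le_iff₀ (by positivity)).mp ((hB ⟨v + 1, rfl⟩).trans (Nat.le_ceil B))
  calc (v + 1) ^ k ≤ ⌈B⌉₊ * 2 ^ (v + 1) := by exact_mod_cast hv
    _ ≤ (2 * ⌈B⌉₊ + 1) * 2 ^ v := by rw [pow_succ]; nlinarith [Nat.zero_le (2 ^ v)]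

lemma exists_card_divisors_pow_le (k : ℕ) :
    ∃ C : ℕ, ∀ n : ℕ, n ≠ 0 → #n.divisors ^ k ≤ C * n := by
  obtain ⟨A, hA, hpow⟩ := exists_add_one_pow_le_mul_two_pow k
  refine ⟨A ^ 2 ^ k, fun n hn => ?_⟩
  -- A prime `p ≥ 2 ^ k` contributes no constant, since `(v + 1) ^ k ≤ (2 ^ v) ^ k ≤ p ^ v`.
  have hlocal : ∀ p ∈ n.primeFactors, (n.factorization p + 1) ^ k ≤
      (if p < 2 ^ k then A else 1) * p ^ n.factorization p := by
    intro p hp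
    have hp2 : 2 ≤ p := (Nat.prime_of_mem_primeFactors hp).two_le
    split_ifs with hpk
    · exact (hpow _).trans (by gcongr)
    · calc (n.factorization p + 1) ^ k ≤ (2 ^ n.factorization p) ^ k := by
            gcongr
            exact Nat.lt_two_pow_self
        _ = (2 ^ k) ^ n.factorization p := pow_right_comm ..
        _ ≤ 1 * p ^ n.factorization p := by
            rw [one_mul]
            gcongr
            exact not_lt.mp hpk
  have hconst : ∏ p ∈ n.primeFactors, (if p < 2 ^ k then A else 1) ≤ A ^ 2 ^ k := by
    rw [← prod_filter, prod_const]
    refine Nat.pow_le_pow_right hA ?_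
    calc #{p ∈ n.primeFactors | p < 2 ^ k} ≤ #(range (2 ^ k)) :=
          card_le_card fun p hp => mem_range.mpr (mem_filter.mp hp).2
      _ = 2 ^ k := card_range _
  calc #n.divisors ^ k = ∏ p ∈ n.primeFactors, (n.factorization p + 1) ^ k := by
        rw [Nat.card_divisors hn, prod_pow]
    _ ≤ ∏ p ∈ n.primeFactors, (if p < 2 ^ k then A else 1) * p ^ n.factorization p :=
        prod_le_prod' hlocal
    _ = (∏ p ∈ n.primeFactors, if p < 2 ^ k then A else 1) * n := by
        rw [prod_mul_distrib]
        congr 1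
        exact Nat.prod_factorization_pow_eq_self hn
    _ ≤ A ^ 2 ^ k * n := by gcongr

lemma tendsto_card_divisors_div_sqrt :
    Tendsto (fun n : ℕ => (#n.divisors : ℝ) / √n) atTop (nhds 0) := by
  obtain ⟨C, hC⟩ := exists_card_divisors_pow_le 3
  have hsqrt : Tendsto (fun n : ℕ => √(n : ℝ)) atTop atTop :=
    Real.tendsto_sqrt_atTop.comp tendsto_natCast_atTop_atTop
  have hcube : Tendsto (fun n : ℕ => ((#n.divisors : ℝ) / √n) ^ 3) atTop (nhds 0) := by
    refine squeeze_zero' (.of_forall fun n => by positivity) ?_ (hsqrt.const_div_atTop (C : ℝ))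
    filter_upwards [eventually_gt_atTop 0] with n hn
    have hn' : (0 : ℝ) < n := Nat.cast_pos.mpr hn
    have hbound : (#n.divisors : ℝ) ^ 3 ≤ C * n := by exact_mod_cast hC n hn.ne'
    calc ((#n.divisors : ℝ) / √n) ^ 3 ≤ C * n / √n ^ 3 := by rw [div_pow]; gcongr
      _ = C / √n := by
        rw [div_eq_div_iff (by positivity) (by positivity)]
        linear_combination (-C * √n : ℝ) * Real.sq_sqrt hn'.le
  have hroot := hcube.rpow_const (p := ((3 : ℕ) : ℝ)⁻¹) (.inr (by positivity))
  rw [Real.zero_rpow (by norm_num)] at hroot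
  exact hroot.congr fun n => Real.pow_rpow_inv_natCast (by positivity) three_ne_zero

end DivisorBound

section Moebius

open ArithmeticFunction

lemma hasSum_moebius_mul_div (n : ℕ) :
    HasSum (fun g : ℕ => (moebius g : ℝ) * (n / g : ℕ)) (if 1 ≤ n then 1 else 0) := by
  have hsum : ∑ g ∈ Finset.Ioc 0 n, (moebius g : ℝ) * (n / g : ℕ) = if 1 ≤ n then 1 else 0 := by
    have hzeta := sum_Ioc_mul_zeta_eq_sum moebius n
    rw [moebius_mul_coe_zeta] at hzeta
    simp only [one_apply, Finset.sum_ite_eq', Finset.mem_Ioc, zero_lt_one, true_and] at hzeta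
    have hcast := congrArg (Int.cast : ℤ → ℝ) hzeta
    push_cast at hcast
    exact hcast.symm
  rw [← hsum]
  refine hasSum_sum_of_ne_finset_zero fun g hg => ?_
  rcases Nat.eq_zero_or_pos g with rfl | hg0
  · simp
  · have hng : n < g := by simpa [hg0] using hg
    simp [Nat.div_eq_of_lt hng]

lemma tsum_moebius_div_sq : ∑' g : ℕ, (moebius g : ℝ) / (g : ℝ) ^ 2 = 6 / Real.pi ^ 2 := by
  have hLSeries : LSeries (fun g => (moebius g : ℂ)) 2 =
      ((∑' g : ℕ, (moebius g : ℝ) / (g : ℝ) ^ 2 : ℝ) : ℂ) := by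
    rw [LSeries, Complex.ofReal_tsum]
    refine tsum_congr fun g => ?_
    rcases eq_or_ne g 0 with rfl | hg
    · simp
    · rw [LSeries.term_of_ne_zero hg]
      push_cast
      rw [Complex.cpow_ofNat]
  have hprod : riemannZeta 2 * LSeries (fun g => (moebius g : ℂ)) 2 = 1 := by
    rw [← LSeries_zeta_eq_riemannZeta (by norm_num)]
    exact LSeries_zeta_mul_Lseries_moebius (by norm_num)
  rw [hLSeries, riemannZeta_two] at hprod
  have hreal : Real.pi ^ 2 / 6 * ∑' g : ℕ, (moebius g : ℝ) / (g : ℝ) ^ 2 = 1 := by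
    exact_mod_cast hprod
  rw [eq_div_iff (by positivity)]
  linear_combination 6 * hreal

end Moebius

section LatticeBox

open Finset

/-- The integer points of the open rectangle `(-X, X) × (-Y, Y)`. -/
noncomputable def latticeBox (X Y : ℝ) : Finset (ℤ × ℤ) :=
  Ioo (-⌈X⌉) ⌈X⌉ ×ˢ Ioo (-⌈Y⌉) ⌈Y⌉

variable {X Y : ℝ}

lemma mem_latticeBox {q : ℤ × ℤ} :
    q ∈ latticeBox X Y ↔ |(q.1 : ℝ)| < X ∧ |(q.2 : ℝ)| < Y := by
  have mem_Ioo_ceil (x : ℤ) (Z : ℝ) : x ∈ Ioo (-⌈Z⌉) ⌈Z⌉ ↔ |(x : ℝ)| < Z := by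
    rw [Finset.mem_Ioo, neg_lt, Int.lt_ceil, Int.lt_ceil, Int.cast_neg, abs_lt, neg_lt]
  rw [latticeBox, mem_product, mem_Ioo_ceil, mem_Ioo_ceil]

lemma zero_mem_latticeBox (hX : 0 < X) (hY : 0 < Y) : 0 ∈ latticeBox X Y := by
  simp [mem_latticeBox, hX, hY]

lemma nsmul_mem_latticeBox {n : ℕ} (hn : 0 < n) {q : ℤ × ℤ} :
    n • q ∈ latticeBox X Y ↔ q ∈ latticeBox (X / n) (Y / n) := by
  have hn' : (0 : ℝ) < n := Nat.cast_pos.mpr hn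
  simp [mem_latticeBox, abs_mul, lt_div_iff₀' hn']

lemma card_filter_dvd_latticeBox_erase_zero {d : ℕ} (hd : 0 < d) :
    #{q ∈ (latticeBox X Y).erase 0 | d ∣ Int.gcd q.1 q.2} =
      #((latticeBox (X / d) (Y / d)).erase 0) := by
  have hinj : Function.Injective fun q : ℤ × ℤ => d • q := nsmul_right_injective hd.ne'
  rw [← card_image_of_injective ((latticeBox (X / d) (Y / d)).erase 0) hinj]
  congr 1
  ext q
  simp only [mem_filter, mem_erase, mem_image]
  constructor
  · rintro ⟨⟨hq0, hq⟩, hdvd⟩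
    obtain ⟨⟨x, hx⟩, ⟨y, hy⟩⟩ := Int.dvd_coe_gcd_iff.mp (Int.natCast_dvd_natCast.mpr hdvd)
    obtain rfl : q = d • (x, y) := by ext <;> simp [hx, hy]
    exact ⟨(x, y), ⟨right_ne_zero_of_smul hq0, (nsmul_mem_latticeBox hd).mp hq⟩, rfl⟩
  · rintro ⟨q, ⟨hq0, hq⟩, rfl⟩
    exact ⟨⟨smul_ne_zero hd.ne' hq0, (nsmul_mem_latticeBox hd).mpr hq⟩, by simp [Int.gcd_mul_left]⟩

lemma latticeBox_erase_zero_eq_empty (hX : X ≤ 1) (hY : Y ≤ 1) :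
    (latticeBox X Y).erase 0 = ∅ := by
  have eq_zero {x : ℤ} {Z : ℝ} (hZ : Z ≤ 1) (hx : |(x : ℝ)| < Z) : x = 0 :=
    Int.abs_lt_one_iff.mp (by exact_mod_cast hx.trans_le hZ)
  refine eq_empty_of_forall_notMem fun q hq => ?_
  rw [mem_erase, mem_latticeBox] at hq
  exact hq.1 (Prod.ext (eq_zero hX hq.2.1) (eq_zero hY hq.2.2))

lemma card_latticeBox_erase_zero (hX : 0 < X) (hY : 0 < Y) :
    (#((latticeBox X Y).erase 0) : ℝ) = (2 * ⌈X⌉ - 1) * (2 * ⌈Y⌉ - 1) - 1 := by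
  have card_Ioo_ceil {Z : ℝ} (hZ : 0 < Z) : (#(Ioo (-⌈Z⌉) ⌈Z⌉) : ℝ) = 2 * ⌈Z⌉ - 1 := by
    have hceil : 0 < ⌈Z⌉ := Int.ceil_pos.mpr hZ
    have hcard : (#(Ioo (-⌈Z⌉) ⌈Z⌉) : ℤ) = 2 * ⌈Z⌉ - 1 := by rw [Int.card_Ioo]; lia
    exact_mod_cast hcard
  rw [cast_card_erase_of_mem (zero_mem_latticeBox hX hY), latticeBox, card_product, Nat.cast_mul,
    card_Ioo_ceil hX, card_Ioo_ceil hY]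

lemma abs_card_latticeBox_erase_zero_sub_le (hX : 0 < X) (hY : 0 < Y) :
    |(#((latticeBox X Y).erase 0) : ℝ) - 4 * X * Y| ≤ 4 * (X + Y) := by
  by_cases hsmall : X ≤ 1 ∧ Y ≤ 1
  · rw [latticeBox_erase_zero_eq_empty hsmall.1 hsmall.2, card_empty, abs_le]
    constructor <;> push_cast <;> nlinarith
  · have hsum : 1 ≤ X + Y := by
      by_contra! h
      exact hsmall ⟨by linarith, by linarith⟩
    rw [card_latticeBox_erase_zero hX hY, abs_le]
    have hX₁ := Int.le_ceil X
    have hX₂ := (Int.ceil_lt_add_one X).le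
    have hY₁ := Int.le_ceil Y
    have hY₂ := (Int.ceil_lt_add_one Y).le
    constructor <;> nlinarith

lemma card_latticeBox_erase_zero_le (hX : 0 < X) (hY : 0 < Y) :
    (#((latticeBox X Y).erase 0) : ℝ) ≤ 5 * (X + Y) ^ 2 := by
  by_cases hsmall : X ≤ 1 ∧ Y ≤ 1
  · rw [latticeBox_erase_zero_eq_empty hsmall.1 hsmall.2, card_empty, Nat.cast_zero]
    positivity
  · have hsum : 1 ≤ X + Y := by
      by_contra! h
      exact hsmall ⟨by linarith, by linarith⟩
    have := (abs_le.mp (abs_card_latticeBox_erase_zero_sub_le hX hY)).2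
    nlinarith [sq_nonneg (X - Y)]

end LatticeBox

section ShortVectors

open Finset

variable {X Y : ℝ}

/-- The points of the lattice `Λ` in the open rectangle `(-X, X) × (-Y, Y)`, including `0`. -/
noncomputable def shortVectors (Λ : AddSubgroup (ℤ × ℤ)) (X Y : ℝ) : Finset (ℤ × ℤ) :=
  open Classical in {q ∈ latticeBox X Y | q ∈ Λ}

lemma mem_shortVectors {Λ : AddSubgroup (ℤ × ℤ)} {q : ℤ × ℤ} :
    q ∈ shortVectors Λ X Y ↔ q ∈ latticeBox X Y ∧ q ∈ Λ := by
  classical exact mem_filter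

lemma mem_shortVectors_div {Λ : AddSubgroup (ℤ × ℤ)} {k : ℕ} (hk : 0 < k) {q : ℤ × ℤ} :
    q ∈ shortVectors Λ (X / k) (Y / k) ↔ k • q ∈ latticeBox X Y ∧ q ∈ Λ := by
  rw [mem_shortVectors, nsmul_mem_latticeBox hk]

lemma zero_mem_shortVectors (Λ : AddSubgroup (ℤ × ℤ)) (hX : 0 < X) (hY : 0 < Y) :
    0 ∈ shortVectors Λ X Y :=
  mem_shortVectors.mpr ⟨zero_mem_latticeBox hX hY, Λ.zero_mem⟩

lemma shortVectors_div_subset (Λ : AddSubgroup (ℤ × ℤ)) (hX : 0 < X) (hY : 0 < Y) {k : ℕ}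
    (hk : 0 < k) : shortVectors Λ (X / k) (Y / k) ⊆ shortVectors Λ X Y := by
  have hk' : (1 : ℝ) ≤ k := Nat.one_le_cast.mpr hk
  intro q hq
  rw [mem_shortVectors, mem_latticeBox] at hq ⊢
  exact ⟨⟨hq.1.1.trans_le (div_le_self hX.le hk'), hq.1.2.trans_le (div_le_self hY.le hk')⟩, hq.2⟩

/-- The integer points of the line spanned by `u`. -/
def integerLine (u : ℤ × ℤ) : AddSubgroup (ℤ × ℤ) :=
  ((AddMonoidHom.mulRight u.2).coprod (-AddMonoidHom.mulRight u.1)).ker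

lemma mem_integerLine {u q : ℤ × ℤ} : q ∈ integerLine u ↔ q.1 * u.2 = q.2 * u.1 := by
  simp [integerLine, AddMonoidHom.mem_ker, ← sub_eq_add_neg, sub_eq_zero]

lemma isAddCyclic_integerLine {u : ℤ × ℤ} (hu : u ≠ 0) : IsAddCyclic (integerLine u) := by
  by_cases hu₁ : u.1 = 0
  · have hu₂ : u.2 ≠ 0 := fun h => hu (Prod.ext hu₁ h)
    refine isAddCyclic_of_injective ((AddMonoidHom.snd ℤ ℤ).comp (integerLine u).subtype) ?_
    rw [injective_iff_map_eq_zero]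
    rintro ⟨⟨x, y⟩, hq⟩ (rfl : y = 0)
    rw [mem_integerLine, zero_mul] at hq
    obtain rfl : x = 0 := (mul_eq_zero.mp hq).resolve_right hu₂
    rfl
  · refine isAddCyclic_of_injective ((AddMonoidHom.fst ℤ ℤ).comp (integerLine u).subtype) ?_
    rw [injective_iff_map_eq_zero]
    rintro ⟨⟨x, y⟩, hq⟩ (rfl : x = 0)
    rw [mem_integerLine, zero_mul] at hq
    obtain rfl : y = 0 := (mul_eq_zero.mp hq.symm).resolve_right hu₁
    rfl

lemma exists_forall_zsmul_mem_latticeBox_iff (hX : 0 < X) (hY : 0 < Y) {v : ℤ × ℤ} (hv : v ≠ 0) :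
    ∃ m : ℕ, ∀ j : ℤ, j • v ∈ latticeBox X Y ↔ j.natAbs ≤ m := by
  -- `c` is the gauge of the rectangle at `v`.
  set c : ℝ := max (|(v.1 : ℝ)| / X) (|(v.2 : ℝ)| / Y) with hc
  have hc0 : 0 < c := by
    rw [hc, lt_max_iff]
    by_contra! h
    refine hv (Prod.ext ?_ ?_)
    · simpa [hX] using (div_le_iff₀ hX).mp h.1
    · simpa [hY] using (div_le_iff₀ hY).mp h.2
  refine ⟨⌈1 / c⌉₊ - 1, fun j => ?_⟩
  have hceil : 0 < ⌈1 / c⌉₊ := Nat.ceil_pos.mpr (by positivity)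
  calc j • v ∈ latticeBox X Y ↔ (j.natAbs : ℝ) * c < 1 := by
        rw [hc, mul_max_of_nonneg _ _ (Nat.cast_nonneg _), max_lt_iff, mem_latticeBox,
          mul_div_assoc', mul_div_assoc', div_lt_one hX, div_lt_one hY]
        simp [abs_mul, Nat.cast_natAbs]
    _ ↔ j.natAbs ≤ ⌈1 / c⌉₊ - 1 := by
        rw [← lt_div_iff₀ hc0, ← Nat.lt_ceil, Nat.le_sub_one_iff_lt hceil]

lemma exists_card_shortVectors_zmultiples (hX : 0 < X) (hY : 0 < Y) {v : ℤ × ℤ} (hv : v ≠ 0) :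
    ∃ m : ℕ, ∀ k : ℕ, 0 < k →
      #(shortVectors (AddSubgroup.zmultiples v) (X / k) (Y / k)) = 2 * (m / k) + 1 := by
  obtain ⟨m, hm⟩ := exists_forall_zsmul_mem_latticeBox_iff hX hY hv
  refine ⟨m, fun k hk => ?_⟩
  have himage : shortVectors (AddSubgroup.zmultiples v) (X / k) (Y / k) =
      (Icc (-(m / k : ℕ) : ℤ) (m / k : ℕ)).image (· • v) := by
    ext q
    simp only [mem_shortVectors_div hk, AddSubgroup.mem_zmultiples_iff, mem_image, mem_Icc]
    have hmul (j : ℤ) : k • j • v ∈ latticeBox X Y ↔ -(m / k : ℕ) ≤ j ∧ j ≤ (m / k : ℕ) := by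
      rw [← natCast_zsmul, smul_smul, hm, Int.natAbs_mul, Int.natAbs_natCast, mul_comm,
        ← Nat.le_div_iff_mul_le hk]
      lia
    grind
  rw [himage, card_image_of_injective _ (smul_left_injective ℤ hv), Int.card_Icc]
  lia

lemma exists_card_shortVectors_div {Λ : AddSubgroup (ℤ × ℤ)} (hX : 0 < X) (hY : 0 < Y)
    (hpar : ∀ u ∈ shortVectors Λ X Y, ∀ v ∈ shortVectors Λ X Y, u.1 * v.2 = u.2 * v.1) :
    ∃ m : ℕ, ∀ k : ℕ, 0 < k → #(shortVectors Λ (X / k) (Y / k)) = 2 * (m / k) + 1 := by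
  by_cases htriv : ∀ u ∈ shortVectors Λ X Y, u = 0
  · refine ⟨0, fun k hk => ?_⟩
    rw [Nat.zero_div, card_eq_one]
    exact ⟨0, eq_singleton_iff_unique_mem.mpr
      ⟨zero_mem_shortVectors Λ (by positivity) (by positivity), fun q hq =>
        htriv q (shortVectors_div_subset Λ hX hY hk hq)⟩⟩
  · push Not at htriv
    obtain ⟨u, hu, hu0⟩ := htriv
    have : IsAddCyclic (integerLine u) := isAddCyclic_integerLine hu0
    have : IsAddCyclic (Λ ⊓ integerLine u : AddSubgroup (ℤ × ℤ)) :=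
      AddSubgroup.isAddCyclic_of_le inf_le_right
    obtain ⟨v, hv⟩ :=
      (AddSubgroup.isAddCyclic_iff_exists_zmultiples_eq_top (Λ ⊓ integerLine u)).mp this
    have hv0 : v ≠ 0 := by
      rintro rfl
      have humem : u ∈ Λ ⊓ integerLine u :=
        ⟨(mem_shortVectors.mp hu).2, mem_integerLine.mpr (mul_comm _ _)⟩
      simp [← hv, hu0] at humem
    obtain ⟨m, hm⟩ := exists_card_shortVectors_zmultiples hX hY hv0
    refine ⟨m, fun k hk => ?_⟩
    rw [← hm k hk, hv]
    congr 1
    ext q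
    have hline (hq : q ∈ shortVectors Λ (X / k) (Y / k)) : q ∈ integerLine u :=
      mem_integerLine.mpr (hpar q (shortVectors_div_subset Λ hX hY hk hq) u hu)
    simp only [mem_shortVectors, AddSubgroup.mem_inf] at hline ⊢
    tauto

lemma card_shortVectors_div {Λ : AddSubgroup (ℤ × ℤ)} (hX : 0 < X) (hY : 0 < Y)
    (hpar : ∀ u ∈ shortVectors Λ X Y, ∀ v ∈ shortVectors Λ X Y, u.1 * v.2 = u.2 * v.1)
    {k : ℕ} (hk : 0 < k) :
    #(shortVectors Λ (X / k) (Y / k)) = 2 * (#(shortVectors Λ X Y) / 2 / k) + 1 := by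
  obtain ⟨m, hm⟩ := exists_card_shortVectors_div hX hY hpar
  have hone : #(shortVectors Λ X Y) = 2 * m + 1 := by simpa using hm 1 one_pos
  have hhalf : #(shortVectors Λ X Y) / 2 = m := by lia
  rw [hm k hk, hhalf]

end ShortVectors

section CoprimePairs

open Finset

/-- The integral linear form `q ↦ a * q.1 + b * q.2` with values in a ring. -/
def linearForm {R : Type*} [Ring R] (a b : R) : ℤ × ℤ →+ R :=
  (zmultiplesHom R a).coprod (zmultiplesHom R b)

lemma linearForm_apply {R : Type*} [Ring R] (a b : R) (q : ℤ × ℤ) :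
    linearForm a b q = a * q.1 + b * q.2 := by
  simp [linearForm, Int.cast_comm]

-- Completing `w` to a basis of `ℤ²` turns `linearForm · · w` into the first coordinate.
lemma natCard_isCoprime_linearForm {R : Type*} [CommRing R] (P : R → Prop) {w : ℤ × ℤ}
    (hw : IsCoprime w.1 w.2) :
    Nat.card {p : R × R // IsCoprime p.1 p.2 ∧ P (linearForm p.1 p.2 w)} =
      Nat.card {p : R × R // IsCoprime p.1 p.2 ∧ P p.1} := by
  obtain ⟨u, v, huv⟩ := hw
  have huv' : (u * w.1 + v * w.2 : R) = 1 := by exact_mod_cast congrArg (Int.cast : ℤ → R) huv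
  let e : R × R ≃ R × R :=
    { toFun p := (p.1 * w.1 + p.2 * w.2, u * p.2 - v * p.1)
      invFun p := (u * p.1 - w.2 * p.2, v * p.1 + w.1 * p.2)
      left_inv p := Prod.ext (by linear_combination p.1 * huv') (by linear_combination p.2 * huv')
      right_inv p :=
        Prod.ext (by linear_combination p.1 * huv') (by linear_combination p.2 * huv') }
  refine Nat.card_congr (e.subtypeEquiv fun p => ?_)
  simp only [linearForm_apply, e, Equiv.coe_fn_mk]
  refine and_congr_left fun _ => ⟨fun ⟨a, b, hab⟩ => ?_, fun ⟨a, b, hab⟩ => ?_⟩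
  · exact ⟨a * u + b * v, b * w.1 - a * w.2, by linear_combination hab + (a * p.1 + b * p.2) * huv'⟩
  · exact ⟨a * w.1 - b * v, a * w.2 + b * u, by linear_combination hab⟩

lemma isCoprime_natCast_zmod_iff {N m n : ℕ} :
    IsCoprime (m : ZMod N) (n : ZMod N) ↔ Nat.gcd (Nat.gcd m n) N = 1 := by
  constructor
  · rintro ⟨a, b, hab⟩
    set g := Nat.gcd (Nat.gcd m n) N
    have hgN : g ∣ N := Nat.gcd_dvd_right _ _
    have hgm : g ∣ m := (Nat.gcd_dvd_left _ _).trans (Nat.gcd_dvd_left _ _)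
    have hgn : g ∣ n := (Nat.gcd_dvd_left _ _).trans (Nat.gcd_dvd_right _ _)
    have hzero := congrArg (ZMod.castHom hgN (ZMod g)) hab
    rw [map_add, map_mul, map_mul, map_natCast, map_natCast, map_one,
      (ZMod.natCast_eq_zero_iff m g).mpr hgm, (ZMod.natCast_eq_zero_iff n g).mpr hgn,
      mul_zero, mul_zero, add_zero, ← Nat.cast_one] at hzero
    exact Nat.dvd_one.mp ((ZMod.natCast_eq_zero_iff 1 g).mp hzero.symm)
  · intro hgcd
    have hbezout := Nat.gcd_eq_gcd_ab (Nat.gcd m n) N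
    rw [hgcd, Nat.gcd_eq_gcd_ab m n] at hbezout
    have hmod := congrArg (Int.cast : ℤ → ZMod N) hbezout
    push_cast at hmod
    rw [ZMod.natCast_self] at hmod
    exact ⟨m.gcdA n * (m.gcd n).gcdA N, m.gcdB n * (m.gcd n).gcdA N, by linear_combination -hmod⟩

/-- The pairs of residues modulo `N` that together with `N` have no common factor, represented
by natural numbers below `N`. -/
def coprimePairs (N : ℕ) : Finset (ℕ × ℕ) :=
  {p ∈ range N ×ˢ range N | Nat.gcd (Nat.gcd p.1 p.2) N = 1}

lemma mem_coprimePairs {N : ℕ} {p : ℕ × ℕ} :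
    p ∈ coprimePairs N ↔ p.1 < N ∧ p.2 < N ∧ Nat.gcd (Nat.gcd p.1 p.2) N = 1 := by
  simp [coprimePairs, and_assoc]

variable {N : ℕ}

lemma card_filter_coprimePairs [NeZero N] (P : ZMod N × ZMod N → Prop) [DecidablePred P] :
    #{p ∈ coprimePairs N | P (p.1, p.2)} =
      Nat.card {p : ZMod N × ZMod N // IsCoprime p.1 p.2 ∧ P p} := by
  rw [← Nat.card_eq_finsetCard]
  refine Nat.card_congr
    { toFun p := ⟨(p.1.1, p.1.2), ?_⟩
      invFun p := ⟨(p.1.1.val, p.1.2.val), ?_⟩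
      left_inv p := ?_
      right_inv p := by simp }
  · obtain ⟨p, hp⟩ := p
    rw [mem_filter, mem_coprimePairs, ← isCoprime_natCast_zmod_iff] at hp
    exact ⟨hp.1.2.2, hp.2⟩
  · rw [mem_filter, mem_coprimePairs, ← isCoprime_natCast_zmod_iff]
    simpa [ZMod.val_lt] using p.2
  · obtain ⟨p, hp⟩ := p
    rw [mem_filter, mem_coprimePairs] at hp
    exact Subtype.ext (Prod.ext (ZMod.val_natCast_of_lt hp.1.1) (ZMod.val_natCast_of_lt hp.1.2.1))

lemma card_filter_coprimePairs_linearForm [NeZero N] (P : ZMod N → Prop) [DecidablePred P]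
    {w : ℤ × ℤ} (hw : IsCoprime w.1 w.2) :
    #{p ∈ coprimePairs N | P (linearForm (p.1 : ZMod N) p.2 w)} =
      #{p ∈ coprimePairs N | P p.1} := by
  rw [card_filter_coprimePairs fun p => P (linearForm p.1 p.2 w),
    natCard_isCoprime_linearForm P hw, card_filter_coprimePairs fun p => P p.1]

/-- The number of pairs in `coprimePairs N` whose first entry has additive order `d` modulo `N`,
for `d ∣ N`. -/
def orderCount (N d : ℕ) : ℕ := d * Nat.totient d * Nat.totient (N / d)

lemma card_filter_coprime_range_mul (m d : ℕ) :
    #{y ∈ range (d * m) | m.Coprime y} = d * Nat.totient m := by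
  rw [← Nat.count_eq_card_filter_range]
  induction d with
  | zero => simp
  | succ d ih =>
    have hperiod : Nat.count (fun k => m.Coprime (d * m + k)) m = Nat.totient m := by
      simp [Nat.totient_eq_card_coprime, Nat.count_eq_card_filter_range]
    rw [add_mul, one_mul, Nat.count_add, ih, hperiod, add_mul, one_mul]

lemma card_filter_addOrderOf_eq (hN : N ≠ 0) {d : ℕ} (hd : d ∣ N) :
    #{p ∈ coprimePairs N | addOrderOf (p.1 : ZMod N) = d} = orderCount N d := by
  have hdiv : N / d ∣ N := Nat.div_dvd_of_dvd hd
  have horder (x : ℕ) : addOrderOf (x : ZMod N) = d ↔ N.gcd x = N / d := by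
    rw [ZMod.addOrderOf_coe x hN]
    constructor
    · rintro rfl
      exact (Nat.div_div_self (Nat.gcd_dvd_left N x) hN).symm
    · intro h
      rw [h, Nat.div_div_self hd hN]
  have hprod : {p ∈ coprimePairs N | addOrderOf (p.1 : ZMod N) = d} =
      {x ∈ range N | N.gcd x = N / d} ×ˢ {y ∈ range N | (N / d).Coprime y} := by
    ext ⟨x, y⟩
    have hgcd : Nat.gcd (Nat.gcd x y) N = (N.gcd x).gcd y := by
      rw [Nat.gcd_comm, ← Nat.gcd_assoc]
    simp only [mem_filter, mem_coprimePairs, mem_product, mem_range, horder, hgcd, Nat.Coprime]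
    grind
  have hsecond : #{y ∈ range N | (N / d).Coprime y} = d * Nat.totient (N / d) := by
    simpa only [Nat.mul_div_cancel' hd] using card_filter_coprime_range_mul (N / d) d
  rw [hprod, card_product, ← Nat.totient_div_of_dvd hdiv, Nat.div_div_self hd hN, hsecond,
    orderCount]
  ring

lemma addOrderOf_natCast_mem_divisors (hN : N ≠ 0) (x : ℕ) :
    addOrderOf (x : ZMod N) ∈ N.divisors := by
  rw [ZMod.addOrderOf_coe x hN]
  exact Nat.mem_divisors.mpr ⟨Nat.div_dvd_of_dvd (Nat.gcd_dvd_left N x), hN⟩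

lemma card_filter_addOrderOf_dvd (hN : N ≠ 0) (g : ℕ) :
    #{p ∈ coprimePairs N | addOrderOf (p.1 : ZMod N) ∣ g} =
      ∑ d ∈ N.divisors with d ∣ g, orderCount N d := by
  rw [card_eq_sum_card_fiberwise (f := fun p : ℕ × ℕ => addOrderOf (p.1 : ZMod N))
    (t := {d ∈ N.divisors | d ∣ g}) fun p hp => mem_filter.mpr
      ⟨addOrderOf_natCast_mem_divisors hN p.1, (mem_filter.mp hp).2⟩]
  refine sum_congr rfl fun d hd => ?_
  rw [mem_filter] at hd
  rw [← card_filter_addOrderOf_eq hN (Nat.dvd_of_mem_divisors hd.1), filter_filter]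
  congr 1
  exact filter_congr fun p _ => ⟨And.right, fun h => ⟨h.dvd.trans hd.2, h⟩⟩

lemma card_coprimePairs (hN : N ≠ 0) : #(coprimePairs N) = ∑ d ∈ N.divisors, orderCount N d := by
  simpa using card_filter_addOrderOf_dvd hN 0

lemma mul_totient_le_card_coprimePairs (hN : N ≠ 0) :
    N * Nat.totient N ≤ #(coprimePairs N) := by
  have hself : orderCount N N = N * Nat.totient N := by
    simp [orderCount, Nat.div_self (Nat.pos_of_ne_zero hN)]
  rw [card_coprimePairs hN, ← hself]
  exact single_le_sum (fun _ _ => Nat.zero_le _) (Nat.mem_divisors_self N hN)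

lemma card_coprimePairs_pos (hN : N ≠ 0) : 0 < #(coprimePairs N) :=
  (Nat.mul_pos (Nat.pos_of_ne_zero hN) (Nat.totient_pos.mpr (Nat.pos_of_ne_zero hN))).trans_le
    (mul_totient_le_card_coprimePairs hN)

lemma sum_orderCount_div_sq (hN : N ≠ 0) :
    ∑ d ∈ N.divisors, (orderCount N d : ℝ) / (d : ℝ) ^ 2 = #(coprimePairs N) / N := by
  rw [card_coprimePairs hN, ← Nat.sum_div_divisors N (orderCount N), Nat.cast_sum, sum_div]
  refine sum_congr rfl fun d hd => ?_
  have hdN := Nat.dvd_of_mem_divisors hd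
  have hd0 : (d : ℝ) ≠ 0 := Nat.cast_ne_zero.mpr (Nat.pos_of_mem_divisors hd).ne'
  have hN0 : (N : ℝ) ≠ 0 := Nat.cast_ne_zero.mpr hN
  rw [orderCount, orderCount, Nat.div_div_self hdN hN]
  push_cast [Nat.cast_div hdN hd0]
  field_simp

lemma orderCount_div_le (hN : N ≠ 0) {d : ℕ} (hd : d ∣ N) :
    (orderCount N d : ℝ) / d ≤ #(coprimePairs N) / N := by
  have hd0 : (0 : ℝ) < d := Nat.cast_pos.mpr (Nat.pos_of_dvd_of_pos hd (Nat.pos_of_ne_zero hN))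
  have hN0 : (0 : ℝ) < N := Nat.cast_pos.mpr (Nat.pos_of_ne_zero hN)
  have htotient : Nat.totient d * Nat.totient (N / d) ≤ Nat.totient N := by
    simpa only [Nat.mul_div_cancel' hd] using Nat.totient_super_multiplicative d (N / d)
  rw [div_le_div_iff₀ hd0 hN0]
  have hbound : orderCount N d * N ≤ #(coprimePairs N) * d := calc
    orderCount N d * N = N * (Nat.totient d * Nat.totient (N / d)) * d := by
      rw [orderCount]; ring
    _ ≤ N * Nat.totient N * d := by gcongr
    _ ≤ #(coprimePairs N) * d := by gcongr; exact mul_totient_le_card_coprimePairs hN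
  exact_mod_cast hbound

end CoprimePairs

section CongruenceLattice

open Finset

/-- The lattice of integral solutions `q` of the congruence `p.1 * q.1 + p.2 * q.2 ≡ 0 (mod N)`. -/
def congruenceLattice (N : ℕ) (p : ℕ × ℕ) : AddSubgroup (ℤ × ℤ) :=
  (linearForm (p.1 : ZMod N) p.2).ker

variable {N : ℕ} {X Y : ℝ}

lemma mem_congruenceLattice {p : ℕ × ℕ} {q : ℤ × ℤ} :
    q ∈ congruenceLattice N p ↔ (p.1 : ZMod N) * q.1 + (p.2 : ZMod N) * q.2 = 0 := by
  rw [congruenceLattice, AddMonoidHom.mem_ker, linearForm_apply]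

lemma mul_eq_mul_of_mem_shortVectors_congruenceLattice {p : ℕ × ℕ} (hp : p ∈ coprimePairs N)
    (hXY : 2 * X * Y ≤ N) {u v : ℤ × ℤ} (hu : u ∈ shortVectors (congruenceLattice N p) X Y)
    (hv : v ∈ shortVectors (congruenceLattice N p) X Y) : u.1 * v.2 = u.2 * v.1 := by
  rw [mem_shortVectors, mem_latticeBox, mem_congruenceLattice] at hu hv
  obtain ⟨⟨hu₁, hu₂⟩, hu0⟩ := hu
  obtain ⟨⟨hv₁, hv₂⟩, hv0⟩ := hv
  obtain ⟨a, b, hab⟩ := isCoprime_natCast_zmod_iff.mpr (mem_coprimePairs.mp hp).2.2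
  have hdvd : (N : ℤ) ∣ u.1 * v.2 - u.2 * v.1 := by
    rw [← ZMod.intCast_zmod_eq_zero_iff_dvd]
    push_cast
    linear_combination (-(u.1 * v.2 - u.2 * v.1 : ZMod N)) * hab +
      a * (v.2 * hu0 - u.2 * hv0) + b * (u.1 * hv0 - v.1 * hu0)
  have hlt : |(u.1 : ℝ) * v.2 - u.2 * v.1| < N := calc
    |(u.1 : ℝ) * v.2 - u.2 * v.1| ≤ |(u.1 : ℝ)| * |(v.2 : ℝ)| + |(v.1 : ℝ)| * |(u.2 : ℝ)| := by
      rw [← abs_mul, ← abs_mul, mul_comm (v.1 : ℝ)]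
      exact abs_sub _ _
    _ < X * Y + X * Y := by gcongr
    _ ≤ N := by linarith
  exact sub_eq_zero.mp (Int.eq_zero_of_abs_lt_dvd hdvd (by exact_mod_cast hlt))

open Classical in
lemma card_filter_mem_congruenceLattice (hN : N ≠ 0) {v : ℤ × ℤ} (hv : v ≠ 0) :
    #{p ∈ coprimePairs N | v ∈ congruenceLattice N p} =
      ∑ d ∈ N.divisors with d ∣ Int.gcd v.1 v.2, orderCount N d := by
  have : NeZero N := ⟨hN⟩
  have hgcd : 0 < Int.gcd v.1 v.2 :=
    Int.gcd_pos_iff.mpr (by by_contra! h; exact hv (Prod.ext h.1 h.2))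
  obtain ⟨x, y, hxy, hx, hy⟩ := Int.exists_gcd_one hgcd
  set g := Int.gcd v.1 v.2
  have hv_eq : v = g • (x, y) := by
    ext
    · simpa [mul_comm] using hx
    · simpa [mul_comm] using hy
  have hmem (p : ℕ × ℕ) : v ∈ congruenceLattice N p ↔
      addOrderOf (linearForm (p.1 : ZMod N) p.2 (x, y)) ∣ g := by
    rw [congruenceLattice, AddMonoidHom.mem_ker, hv_eq, map_nsmul, addOrderOf_dvd_iff_nsmul_eq_zero]
  simp only [hmem]
  rw [card_filter_coprimePairs_linearForm (fun z => addOrderOf z ∣ g)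
    (Int.isCoprime_iff_gcd_eq_one.mpr hxy), card_filter_addOrderOf_dvd hN]

lemma sum_card_shortVectors_erase_zero (hN : N ≠ 0) :
    ∑ p ∈ coprimePairs N, #((shortVectors (congruenceLattice N p) X Y).erase 0) =
      ∑ d ∈ N.divisors, orderCount N d * #((latticeBox (X / d) (Y / d)).erase 0) := by
  classical
  calc ∑ p ∈ coprimePairs N, #((shortVectors (congruenceLattice N p) X Y).erase 0)
      = ∑ p ∈ coprimePairs N, #{v ∈ (latticeBox X Y).erase 0 | v ∈ congruenceLattice N p} := by
        refine sum_congr rfl fun p _ => ?_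
        congr 1
        ext v
        rw [mem_erase, mem_shortVectors, mem_filter, mem_erase, and_assoc]
    _ = ∑ v ∈ (latticeBox X Y).erase 0, #{p ∈ coprimePairs N | v ∈ congruenceLattice N p} :=
        sum_card_bipartiteAbove_eq_sum_card_bipartiteBelow fun p v => v ∈ congruenceLattice N p
    _ = ∑ v ∈ (latticeBox X Y).erase 0, ∑ d ∈ N.divisors with d ∣ Int.gcd v.1 v.2,
          orderCount N d :=
        sum_congr rfl fun v hv => card_filter_mem_congruenceLattice hN (mem_erase.mp hv).1
    _ = ∑ d ∈ N.divisors, ∑ v ∈ (latticeBox X Y).erase 0 with d ∣ Int.gcd v.1 v.2,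
          orderCount N d := sum_comm' (by simp; tauto)
    _ = ∑ d ∈ N.divisors, orderCount N d * #((latticeBox (X / d) (Y / d)).erase 0) := by
        refine sum_congr rfl fun d hd => ?_
        rw [sum_const, smul_eq_mul, mul_comm,
          card_filter_dvd_latticeBox_erase_zero (Nat.pos_of_mem_divisors hd)]

/-- The number of nonzero points of `congruenceLattice N p` in the rectangle
`(-X, X) × (-Y, Y)`, averaged over `p ∈ coprimePairs N`. -/
noncomputable def meanShortVectors (N : ℕ) (X Y : ℝ) : ℝ :=
  (∑ p ∈ coprimePairs N, (#((shortVectors (congruenceLattice N p) X Y).erase 0) : ℝ)) /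
    #(coprimePairs N)

lemma meanShortVectors_nonneg : 0 ≤ meanShortVectors N X Y := by
  unfold meanShortVectors
  positivity

lemma meanShortVectors_mul_card (hN : N ≠ 0) :
    meanShortVectors N X Y * #(coprimePairs N) =
      ∑ d ∈ N.divisors, (orderCount N d : ℝ) * #((latticeBox (X / d) (Y / d)).erase 0) := by
  have hJ : (#(coprimePairs N) : ℝ) ≠ 0 := Nat.cast_ne_zero.mpr (card_coprimePairs_pos hN).ne'
  rw [meanShortVectors, div_mul_cancel₀ _ hJ]
  exact_mod_cast sum_card_shortVectors_erase_zero hN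

lemma meanShortVectors_le (hN : N ≠ 0) (hX : 0 < X) (hY : 0 < Y) :
    meanShortVectors N X Y ≤ 5 * (X + Y) ^ 2 / N := by
  have hJ : (0 : ℝ) < #(coprimePairs N) := Nat.cast_pos.mpr (card_coprimePairs_pos hN)
  refine le_of_mul_le_mul_right ?_ hJ
  calc meanShortVectors N X Y * #(coprimePairs N)
      = ∑ d ∈ N.divisors, (orderCount N d : ℝ) * #((latticeBox (X / d) (Y / d)).erase 0) :=
        meanShortVectors_mul_card hN
    _ ≤ ∑ d ∈ N.divisors, (orderCount N d : ℝ) * (5 * (X / d + Y / d) ^ 2) := by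
        refine sum_le_sum fun d hd => ?_
        have hd0 : (0 : ℝ) < d := Nat.cast_pos.mpr (Nat.pos_of_mem_divisors hd)
        gcongr
        exact card_latticeBox_erase_zero_le (by positivity) (by positivity)
    _ = 5 * (X + Y) ^ 2 * ∑ d ∈ N.divisors, (orderCount N d : ℝ) / (d : ℝ) ^ 2 := by
        rw [mul_sum]
        exact sum_congr rfl fun d _ => by ring
    _ = 5 * (X + Y) ^ 2 / N * #(coprimePairs N) := by
        rw [sum_orderCount_div_sq hN]
        ring

lemma abs_meanShortVectors_sub_le (hN : N ≠ 0) (hX : 0 < X) (hY : 0 < Y) :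
    |meanShortVectors N X Y - 4 * X * Y / N| ≤ 4 * (X + Y) * #N.divisors / N := by
  have hJ : (0 : ℝ) < #(coprimePairs N) := Nat.cast_pos.mpr (card_coprimePairs_pos hN)
  have hmain : 4 * X * Y / N * #(coprimePairs N) =
      ∑ d ∈ N.divisors, (orderCount N d : ℝ) * (4 * (X / d) * (Y / d)) := calc
    4 * X * Y / N * #(coprimePairs N)
      = 4 * X * Y * ∑ d ∈ N.divisors, (orderCount N d : ℝ) / (d : ℝ) ^ 2 := by
        rw [sum_orderCount_div_sq hN]
        ring
    _ = _ := by
        rw [mul_sum]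
        exact sum_congr rfl fun d _ => by ring
  have hterm : ∀ d ∈ N.divisors,
      |(orderCount N d : ℝ) * #((latticeBox (X / d) (Y / d)).erase 0) -
        orderCount N d * (4 * (X / d) * (Y / d))| ≤ 4 * (X + Y) * (#(coprimePairs N) / N) := by
    intro d hd
    have hd0 : (0 : ℝ) < d := Nat.cast_pos.mpr (Nat.pos_of_mem_divisors hd)
    rw [← mul_sub, abs_mul, Nat.abs_cast]
    calc _ ≤ orderCount N d * (4 * (X / d + Y / d)) := by
          gcongr
          exact abs_card_latticeBox_erase_zero_sub_le (by positivity) (by positivity)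
      _ = 4 * (X + Y) * (orderCount N d / d) := by ring
      _ ≤ 4 * (X + Y) * (#(coprimePairs N) / N) := by
          have := orderCount_div_le hN (Nat.dvd_of_mem_divisors hd)
          gcongr ?_ * ?_
  refine le_of_mul_le_mul_right ?_ hJ
  calc |meanShortVectors N X Y - 4 * X * Y / N| * #(coprimePairs N)
      = |meanShortVectors N X Y * #(coprimePairs N) - 4 * X * Y / N * #(coprimePairs N)| := by
        rw [← sub_mul, abs_mul, Nat.abs_cast]
    _ ≤ ∑ d ∈ N.divisors, 4 * (X + Y) * (#(coprimePairs N) / N) := by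
        rw [meanShortVectors_mul_card hN, hmain, ← sum_sub_distrib]
        exact (abs_sum_le_sum_abs _ _).trans (sum_le_sum hterm)
    _ = 4 * (X + Y) * #N.divisors / N * #(coprimePairs N) := by
        rw [sum_const, nsmul_eq_mul]
        ring

end CongruenceLattice

section SolutionProportion

open Finset
open ArithmeticFunction (moebius abs_moebius_le_one)

variable {X Y α β : ℝ} {N k : ℕ}

lemma hasSum_moebius_mul_card_shortVectors {Λ : AddSubgroup (ℤ × ℤ)} (hX : 0 < X) (hY : 0 < Y)
    (hpar : ∀ u ∈ shortVectors Λ X Y, ∀ v ∈ shortVectors Λ X Y, u.1 * v.2 = u.2 * v.1)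
    (hk : 0 < k) :
    HasSum (fun g : ℕ => (moebius g : ℝ) *
        #((shortVectors Λ (X / (k * g : ℕ)) (Y / (k * g : ℕ))).erase 0))
      (if 2 * k + 1 ≤ #(shortVectors Λ X Y) then 2 else 0) := by
  have hodd : #(shortVectors Λ X Y) = 2 * (#(shortVectors Λ X Y) / 2) + 1 := by
    simpa using card_shortVectors_div hX hY hpar one_pos
  set m := #(shortVectors Λ X Y) / 2
  have hvalue : (if 2 * k + 1 ≤ #(shortVectors Λ X Y) then 2 else 0 : ℝ) =
      2 * if 1 ≤ m / k then 1 else 0 := by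
    have hiff : 2 * k + 1 ≤ #(shortVectors Λ X Y) ↔ 1 ≤ m / k := by
      rw [Nat.le_div_iff_mul_le hk]
      lia
    simp only [hiff, mul_ite, mul_one, mul_zero]
  rw [hvalue]
  refine ((hasSum_moebius_mul_div (m / k)).mul_left 2).congr_fun fun g => ?_
  rcases Nat.eq_zero_or_pos g with rfl | hg
  · simp
  · have hkg : 0 < k * g := Nat.mul_pos hk hg
    have hkg' : (0 : ℝ) < (k * g : ℕ) := Nat.cast_pos.mpr hkg
    rw [card_erase_of_mem (zero_mem_shortVectors Λ (div_pos hX hkg') (div_pos hY hkg')),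
      card_shortVectors_div hX hY hpar hkg, Nat.add_sub_cancel, ← Nat.div_div_eq_div_mul]
    push_cast
    ring

/-- The proportion of the pairs `p ∈ coprimePairs N` for which the number of solutions of
`p.1 * x + p.2 * y ≡ 0 (mod N)` with `|x| < X` and `|y| < Y` satisfies `P`. -/
noncomputable def solutionProportion (N : ℕ) (X Y : ℝ) (P : ℕ → Prop) [DecidablePred P] : ℝ :=
  #{p ∈ coprimePairs N | P #(shortVectors (congruenceLattice N p) X Y)} / #(coprimePairs N)

lemma hasSum_moebius_mul_meanShortVectors (hX : 0 < X) (hY : 0 < Y) (hXY : 2 * X * Y ≤ N)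
    (hk : 0 < k) :
    HasSum (fun g : ℕ => (moebius g : ℝ) *
        meanShortVectors N (X / (k * g : ℕ)) (Y / (k * g : ℕ)))
      (2 * solutionProportion N X Y (2 * k + 1 ≤ ·)) := by
  have hsum := (hasSum_sum fun p hp => hasSum_moebius_mul_card_shortVectors
    (Λ := congruenceLattice N p) hX hY
    (fun u hu v hv => mul_eq_mul_of_mem_shortVectors_congruenceLattice hp hXY hu hv) hk).div_const
      (#(coprimePairs N) : ℝ)
  rw [← sum_filter, sum_const, nsmul_eq_mul, mul_comm, mul_div_assoc] at hsum
  refine hsum.congr_fun fun g => ?_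
  rw [meanShortVectors, mul_div_assoc', mul_sum]

lemma tendsto_meanShortVectors (hα : 0 < α) (hβ : 0 < β) :
    Tendsto (fun N : ℕ => meanShortVectors N (α * √N) (β * √N)) atTop (nhds (4 * α * β)) := by
  rw [tendsto_iff_norm_sub_tendsto_zero]
  have hbound : Tendsto (fun N : ℕ => 4 * (α + β) * ((#N.divisors : ℝ) / √N)) atTop (nhds 0) := by
    simpa using tendsto_card_divisors_div_sqrt.const_mul (4 * (α + β))
  refine squeeze_zero' (.of_forall fun _ => norm_nonneg _) ?_ hbound
  filter_upwards [eventually_gt_atTop 0] with N hN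
  have hN' : (0 : ℝ) < N := Nat.cast_pos.mpr hN
  have hsq : √(N : ℝ) * √N = N := Real.mul_self_sqrt hN'.le
  have hmain : 4 * (α * √N) * (β * √N) / N = 4 * α * β := by
    rw [div_eq_iff hN'.ne']
    linear_combination 4 * α * β * hsq
  have herror : 4 * (α * √N + β * √N) * #N.divisors / N = 4 * (α + β) * (#N.divisors / √N) := by
    rw [mul_div_assoc', div_eq_div_iff hN'.ne' (by positivity)]
    linear_combination 4 * (α + β) * #N.divisors * hsq
  have habs := abs_meanShortVectors_sub_le hN.ne' (X := α * √N) (Y := β * √N)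
    (by positivity) (by positivity)
  rwa [hmain, herror] at habs

lemma norm_moebius_mul_meanShortVectors_le (hN : N ≠ 0) (hα : 0 < α) (hβ : 0 < β) (hk : 0 < k)
    (g : ℕ) :
    ‖(moebius g : ℝ) *
        meanShortVectors N (α / (k * g : ℕ) * √N) (β / (k * g : ℕ) * √N)‖ ≤
      5 * (α + β) ^ 2 / k ^ 2 * (1 / (g : ℝ) ^ 2) := by
  rcases Nat.eq_zero_or_pos g with rfl | hg
  · simp
  · have hN' : (0 : ℝ) < N := Nat.cast_pos.mpr (Nat.pos_of_ne_zero hN)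
    have hμ : ‖(moebius g : ℝ)‖ ≤ 1 := by
      rw [Real.norm_eq_abs]
      exact_mod_cast abs_moebius_le_one
    rw [norm_mul, Real.norm_of_nonneg meanShortVectors_nonneg]
    calc _ ≤ meanShortVectors N (α / (k * g : ℕ) * √N) (β / (k * g : ℕ) * √N) :=
          mul_le_of_le_one_left meanShortVectors_nonneg hμ
      _ ≤ 5 * (α / (k * g : ℕ) * √N + β / (k * g : ℕ) * √N) ^ 2 / N :=
          meanShortVectors_le hN (by positivity) (by positivity)
      _ = 5 * (α + β) ^ 2 / k ^ 2 * (1 / (g : ℝ) ^ 2) := by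
          rw [← add_mul, mul_pow, Real.sq_sqrt hN'.le]
          push_cast
          field_simp

lemma tendsto_tsum_moebius_mul_meanShortVectors (hα : 0 < α) (hβ : 0 < β) (hk : 0 < k) :
    Tendsto (fun N : ℕ => ∑' g : ℕ, (moebius g : ℝ) *
        meanShortVectors N (α / (k * g : ℕ) * √N) (β / (k * g : ℕ) * √N)) atTop
      (nhds (24 * α * β / Real.pi ^ 2 / (k : ℝ) ^ 2)) := by
  have hsummable : Summable fun g : ℕ => 5 * (α + β) ^ 2 / k ^ 2 * (1 / (g : ℝ) ^ 2) :=
    (Real.summable_one_div_nat_pow.mpr one_lt_two).mul_left _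
  have hterm (g : ℕ) : Tendsto (fun N : ℕ => (moebius g : ℝ) *
        meanShortVectors N (α / (k * g : ℕ) * √N) (β / (k * g : ℕ) * √N)) atTop
      (nhds (moebius g * (4 * (α / (k * g : ℕ)) * (β / (k * g : ℕ))))) := by
    rcases Nat.eq_zero_or_pos g with rfl | hg
    · simp
    · exact (tendsto_meanShortVectors (by positivity) (by positivity)).const_mul _
  have hdom := (eventually_ne_atTop 0).mono fun (N : ℕ) hN =>
    norm_moebius_mul_meanShortVectors_le hN hα hβ hk
  convert tendsto_tsum_of_dominated_convergence hsummable hterm hdom using 2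
  calc 24 * α * β / Real.pi ^ 2 / (k : ℝ) ^ 2
      = 4 * α * β / k ^ 2 * ∑' g : ℕ, (moebius g : ℝ) / (g : ℝ) ^ 2 := by
        rw [tsum_moebius_div_sq]
        ring
    _ = ∑' g : ℕ, (moebius g : ℝ) * (4 * (α / (k * g : ℕ)) * (β / (k * g : ℕ))) := by
        rw [← tsum_mul_left]
        refine tsum_congr fun g => ?_
        push_cast
        ring

lemma two_mul_sqrt_mul_sqrt_le (hαβ : 2 * α * β ≤ 1) (N : ℕ) :
    2 * (α * √N) * (β * √N) ≤ N := by
  have hsq : √(N : ℝ) * √N = N := Real.mul_self_sqrt N.cast_nonneg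
  calc 2 * (α * √N) * (β * √N) = 2 * α * β * N := by linear_combination 2 * α * β * hsq
    _ ≤ N := mul_le_of_le_one_left N.cast_nonneg hαβ

lemma tendsto_solutionProportion_le (hα : 0 < α) (hβ : 0 < β) (hαβ : 2 * α * β ≤ 1)
    (hk : 0 < k) :
    Tendsto (fun N : ℕ => solutionProportion N (α * √N) (β * √N) (2 * k + 1 ≤ ·)) atTop
      (nhds (12 * α * β / Real.pi ^ 2 / (k : ℝ) ^ 2)) := by
  have hlimit := (tendsto_tsum_moebius_mul_meanShortVectors hα hβ hk).div_const 2
  rw [show 24 * α * β / Real.pi ^ 2 / (k : ℝ) ^ 2 / 2 = 12 * α * β / Real.pi ^ 2 / (k : ℝ) ^ 2 by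
    ring] at hlimit
  refine hlimit.congr' ?_
  filter_upwards [eventually_gt_atTop 0] with N hN
  have hsqrt : 0 < √(N : ℝ) := Real.sqrt_pos.mpr (Nat.cast_pos.mpr hN)
  have hsum := (hasSum_moebius_mul_meanShortVectors (mul_pos hα hsqrt) (mul_pos hβ hsqrt)
    (two_mul_sqrt_mul_sqrt_le hαβ N) hk).tsum_eq
  simp only [div_mul_eq_mul_div, hsum]
  ring

lemma odd_card_shortVectors_congruenceLattice {p : ℕ × ℕ} (hp : p ∈ coprimePairs N)
    (hX : 0 < X) (hY : 0 < Y) (hXY : 2 * X * Y ≤ N) :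
    Odd #(shortVectors (congruenceLattice N p) X Y) := by
  have hcard := card_shortVectors_div hX hY
    (fun u hu v hv => mul_eq_mul_of_mem_shortVectors_congruenceLattice hp hXY hu hv) one_pos
  exact ⟨_, by simpa using hcard⟩

lemma solutionProportion_eq_of_even (hX : 0 < X) (hY : 0 < Y) (hXY : 2 * X * Y ≤ N) {r : ℕ}
    (hr : Even r) : solutionProportion N X Y (· = r) = 0 := by
  rw [solutionProportion, filter_eq_empty_iff.mpr, card_empty, Nat.cast_zero, zero_div]
  rintro p hp rfl
  exact Nat.not_even_iff_odd.mpr (odd_card_shortVectors_congruenceLattice hp hX hY hXY) hr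

lemma solutionProportion_one_le (hN : N ≠ 0) (hX : 0 < X) (hY : 0 < Y) :
    solutionProportion N X Y (1 ≤ ·) = 1 := by
  have hall : ∀ p ∈ coprimePairs N, 1 ≤ #(shortVectors (congruenceLattice N p) X Y) :=
    fun p _ => card_pos.mpr ⟨0, zero_mem_shortVectors _ hX hY⟩
  rw [solutionProportion, filter_true_of_mem hall, div_self]
  exact Nat.cast_ne_zero.mpr (card_coprimePairs_pos hN).ne'

lemma solutionProportion_eq_sub (hX : 0 < X) (hY : 0 < Y) (hXY : 2 * X * Y ≤ N) (k : ℕ) :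
    solutionProportion N X Y (· = 2 * k + 1) =
      solutionProportion N X Y (2 * k + 1 ≤ ·) -
        solutionProportion N X Y (2 * (k + 1) + 1 ≤ ·) := by
  simp only [solutionProportion]
  rw [← sub_div, eq_comm]
  congr 1
  rw [sub_eq_iff_eq_add]
  norm_cast
  rw [← card_union_of_disjoint]
  · congr 1
    ext p
    simp only [mem_union, mem_filter, ← and_or_left]
    refine and_congr_right fun hp => ?_
    have := odd_card_shortVectors_congruenceLattice hp hX hY hXY
    grind
  · exact disjoint_filter.mpr fun p _ => by lia

lemma tendsto_solutionProportion_eq_of_even (hα : 0 < α) (hβ : 0 < β) (hαβ : 2 * α * β ≤ 1)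
    {r : ℕ} (hr : Even r) :
    Tendsto (fun N : ℕ => solutionProportion N (α * √N) (β * √N) (· = r)) atTop (nhds 0) := by
  refine tendsto_const_nhds.congr' ?_
  filter_upwards [eventually_gt_atTop 0] with N hN
  have hsqrt : 0 < √(N : ℝ) := Real.sqrt_pos.mpr (Nat.cast_pos.mpr hN)
  exact (solutionProportion_eq_of_even (mul_pos hα hsqrt) (mul_pos hβ hsqrt)
    (two_mul_sqrt_mul_sqrt_le hαβ N) hr).symm

lemma tendsto_solutionProportion_eq_of_tendsto_le {limit : ℝ} (hα : 0 < α) (hβ : 0 < β)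
    (hαβ : 2 * α * β ≤ 1)
    (hlimit : Tendsto (fun N : ℕ => solutionProportion N (α * √N) (β * √N) (2 * k + 1 ≤ ·)) atTop
      (nhds limit)) :
    Tendsto (fun N : ℕ => solutionProportion N (α * √N) (β * √N) (· = 2 * k + 1)) atTop
      (nhds (limit - 12 * α * β / Real.pi ^ 2 / ((k : ℝ) + 1) ^ 2)) := by
  have hsucc := tendsto_solutionProportion_le hα hβ hαβ k.succ_pos
  push_cast at hsucc
  refine (hlimit.sub hsucc).congr' ?_
  filter_upwards [eventually_gt_atTop 0] with N hN
  have hsqrt : 0 < √(N : ℝ) := Real.sqrt_pos.mpr (Nat.cast_pos.mpr hN)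
  exact (solutionProportion_eq_sub (mul_pos hα hsqrt) (mul_pos hβ hsqrt)
    (two_mul_sqrt_mul_sqrt_le hαβ N) k).symm

lemma tendsto_solutionProportion_one_le (hα : 0 < α) (hβ : 0 < β) :
    Tendsto (fun N : ℕ => solutionProportion N (α * √N) (β * √N) (1 ≤ ·)) atTop (nhds 1) := by
  refine tendsto_const_nhds.congr' ?_
  filter_upwards [eventually_gt_atTop 0] with N hN
  have hsqrt : 0 < √(N : ℝ) := Real.sqrt_pos.mpr (Nat.cast_pos.mpr hN)
  exact (solutionProportion_one_le hN.ne' (mul_pos hα hsqrt) (mul_pos hβ hsqrt)).symm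

lemma tendsto_solutionProportion_eq_one (hα : 0 < α) (hβ : 0 < β) (hαβ : 2 * α * β ≤ 1) :
    Tendsto (fun N : ℕ => solutionProportion N (α * √N) (β * √N) (· = 1)) atTop
      (nhds (1 - 12 * α * β / Real.pi ^ 2)) := by
  simpa using tendsto_solutionProportion_eq_of_tendsto_le (k := 0) hα hβ hαβ
    (tendsto_solutionProportion_one_le hα hβ)

lemma tendsto_solutionProportion_eq_two_mul_add_one (hα : 0 < α) (hβ : 0 < β)
    (hαβ : 2 * α * β ≤ 1) (hk : 0 < k) :
    Tendsto (fun N : ℕ => solutionProportion N (α * √N) (β * √N) (· = 2 * k + 1)) atTop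
      (nhds (12 * α * β / Real.pi ^ 2 * (1 / (k : ℝ) ^ 2 - 1 / ((k : ℝ) + 1) ^ 2))) := by
  rw [mul_sub, mul_one_div, mul_one_div]
  exact tendsto_solutionProportion_eq_of_tendsto_le hα hβ hαβ
    (tendsto_solutionProportion_le hα hβ hαβ hk)

end SolutionProportion

section Ncard

open Finset

lemma ncard_solutions_eq (N : ℕ) (p : ℕ × ℕ) (X Y : ℝ) :
    Set.ncard {q : ℤ × ℤ | (|q.1| : ℝ) < X ∧ (|q.2| : ℝ) < Y ∧
      (p.1 : ZMod N) * (q.1 : ZMod N) + (p.2 : ZMod N) * (q.2 : ZMod N) = 0} =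
      #(shortVectors (congruenceLattice N p) X Y) := by
  rw [← Set.ncard_coe_finset]
  congr 1
  ext q
  simp [mem_shortVectors, mem_latticeBox, mem_congruenceLattice, and_assoc]

lemma ncard_div_ncard_eq_solutionProportion (N : ℕ) (X Y : ℝ) (P : ℕ → Prop) [DecidablePred P] :
    (Set.ncard {p : ℕ × ℕ | p.1 < N ∧ p.2 < N ∧ Nat.gcd (Nat.gcd p.1 p.2) N = 1 ∧
        P (Set.ncard {q : ℤ × ℤ | (|q.1| : ℝ) < X ∧ (|q.2| : ℝ) < Y ∧
          (p.1 : ZMod N) * (q.1 : ZMod N) + (p.2 : ZMod N) * (q.2 : ZMod N) = 0})} : ℝ) /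
      (Set.ncard {p : ℕ × ℕ |
        p.1 < N ∧ p.2 < N ∧ Nat.gcd (Nat.gcd p.1 p.2) N = 1} : ℝ) =
      solutionProportion N X Y P := by
  rw [solutionProportion, ← Set.ncard_coe_finset, ← Set.ncard_coe_finset]
  congr 3
  · ext p
    simp [ncard_solutions_eq, mem_coprimePairs, and_assoc]
  · ext p
    simp [mem_coprimePairs]

end Ncard

/-- For `0 < a ≤ 2` and an integer `r ≥ 1`, the proportion of pairs
`(r₁,r₂) ∈ {0,…,N−1}²` with `gcd(r₁,r₂,N) = 1` such that the congruence
`r₁x + r₂y ≡ 0 (mod N)` has exactly `r` integer solutions in the box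
`A_N(a) = (−√N/2, √N/2) × (−a√N/2, a√N/2)` tends to `c_{2,r}(a)`, where `c_{2,r}(a) = 0`
for even `r`, `c_{2,1}(a) = 1 − 3a/π²`, and `c_{2,2k+1}(a) = (3a/π²)(1/k² − 1/(k+1)²)`
for `k ≥ 1`. -/
theorem prob_exactly_r_short_solutions (a : ℝ) (ha : 0 < a) (ha2 : a ≤ 2)
    (r : ℕ) (hr : 1 ≤ r) :
    Tendsto (fun N : ℕ =>
      (Set.ncard {p : ℕ × ℕ | p.1 < N ∧ p.2 < N ∧ Nat.gcd (Nat.gcd p.1 p.2) N = 1 ∧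
          Set.ncard {q : ℤ × ℤ |
            (|q.1| : ℝ) < Real.sqrt N / 2 ∧ (|q.2| : ℝ) < a * Real.sqrt N / 2 ∧
            (p.1 : ZMod N) * (q.1 : ZMod N) + (p.2 : ZMod N) * (q.2 : ZMod N) = 0} = r} : ℝ) /
        (Set.ncard {p : ℕ × ℕ |
          p.1 < N ∧ p.2 < N ∧ Nat.gcd (Nat.gcd p.1 p.2) N = 1} : ℝ))
      atTop
      (nhds (if Even r then 0
        else if r = 1 then 1 - 3 * a / Real.pi ^ 2
        else (3 * a / Real.pi ^ 2) *
          (1 / ((((r - 1) / 2 : ℕ) : ℝ) ^ 2) - 1 / ((((r - 1) / 2 : ℕ) : ℝ) + 1) ^ 2))) := by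
  have hβ : 0 < a / 2 := half_pos ha
  have hαβ : 2 * (1 / 2) * (a / 2) ≤ 1 := by linarith
  have hconst : 3 * a = 12 * (1 / 2) * (a / 2) := by ring
  simp_rw [ncard_div_ncard_eq_solutionProportion _ _ _ (· = r), ← one_div_mul_eq_div (2 : ℝ) √_,
    mul_div_right_comm a, hconst]
  rcases Nat.even_or_odd r with heven | ⟨k, rfl⟩
  · rw [if_pos heven]
    exact tendsto_solutionProportion_eq_of_even one_half_pos hβ hαβ heven
  rw [if_neg (by simp)]
  rcases Nat.eq_zero_or_pos k with rfl | hk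
  · rw [mul_zero, zero_add, if_pos rfl]
    exact tendsto_solutionProportion_eq_one one_half_pos hβ hαβ
  · rw [if_neg (by lia), Nat.add_sub_cancel, Nat.mul_div_cancel_left k two_pos]
    exact tendsto_solutionProportion_eq_two_mul_add_one one_half_pos hβ hαβ hk
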